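/- For every ε > 0 and every A > 0 there exists C > 0 such that for every prime power q and all integers n ≥ m ≥ 1 satisfying m ≥ (2+ε)·(log n)/(log q) and √(n·log n) ≤ A·m, writing u = n/m, one has | p_{n,m,q} / ρ( n/m − n/(2m²) ) − 1 | ≤ C·log(u+1)/m. -/

import Mathlib

open Real

noncomputable section

/-- Predicate characterizing the Dickman function `ρ : [0,∞) → (0,∞)`:
continuous on `[0,∞)`, positive, equal to `1` on `[0,1]`, and satisfying the
delay differential equation `t·ρ'(t) + ρ(t-1) = 0` for `t > 1`. -/
def IsDickman (ρ : ℝ → ℝ) : Prop :=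
  ContinuousOn ρ (Set.Ici 0) ∧
  (∀ t : ℝ, 0 ≤ t → 0 < ρ t) ∧
  (∀ t ∈ Set.Icc (0:ℝ) 1, ρ t = 1) ∧
  (∀ t : ℝ, 1 < t → HasDerivAt ρ (-(ρ (t - 1)) / t) t)

/-- `ξ(u)`: for `u > 1`, the unique positive solution of `e^ξ = 1 + u·ξ`; otherwise `0`. -/
def xi (u : ℝ) : ℝ :=
  open Classical in
  if h : ∃ x : ℝ, 0 < x ∧ Real.exp x = 1 + u * x then h.choose else 0

/-- `p_{n,m}`: probability that a uniformly random permutation of `{1,…,n}` is `m`-friable,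
i.e. has no cycle of length greater than `m`. -/
def permProb (n m : ℕ) : ℝ :=
  (Nat.card {σ : Equiv.Perm (Fin n) // ∀ c ∈ σ.cycleType, c ≤ m} : ℝ) /
    (Nat.factorial n : ℝ)

/-- `p_{n,m,q}`: proportion of monic polynomials of degree `n` over a finite field `F`
(of cardinality `q`) that are `m`-friable, i.e. all of whose monic irreducible factors
have degree at most `m`. -/
def polyProb (F : Type) [Field F] [Fintype F] (n m : ℕ) : ℝ :=
  (Nat.card {f : Polynomial F // f.Monic ∧ f.natDegree = n ∧
      ∀ p : Polynomial F, p.Monic → Irreducible p → p ∣ f → p.natDegree ≤ m} : ℝ) /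
    (Fintype.card F : ℝ) ^ n

/-- `F_q(z) = ∏_{deg P ≤ m} (1 - (z/q)^{deg P})⁻¹`, the product over monic irreducible
polynomials `P` over `F` of degree at most `m`. -/
def FqFun (F : Type) [Field F] [Fintype F] (m : ℕ) (z : ℝ) : ℝ :=
  ∏ᶠ p ∈ {p : Polynomial F | p.Monic ∧ Irreducible p ∧ p.natDegree ≤ m},
    (1 - (z / (Fintype.card F : ℝ)) ^ p.natDegree)⁻¹

/-- `G_q(z) = F_q(z) · exp(-∑_{i=1}^m z^i/i)`. -/
def Gq (F : Type) [Field F] [Fintype F] (m : ℕ) (z : ℝ) : ℝ :=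
  FqFun F m z * Real.exp (-(∑ i ∈ Finset.Icc 1 m, z ^ i / (i : ℝ)))

/-- The coefficients `d_{m,i}`. -/
def dcoef (m i : ℕ) : ℝ :=
  if i = m then -(1 / (m : ℝ)) * ∑ j ∈ Finset.Icc 2 m, (1 : ℝ) / (j : ℝ)
  else Real.Gamma ((i : ℝ) + (i : ℝ) / (m : ℝ)) /
    (((m : ℝ) - (i : ℝ)) * (Nat.factorial i : ℝ) * Real.Gamma (1 + (i : ℝ) / (m : ℝ)))

/-- `T(s) = ∫₀^s ((e^t - 1)/t)·((t/m)/(1 - e^{-t/m}) - 1) dt`, integrand extended by `0` at `t = 0`. -/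
def Tfun (m : ℕ) (s : ℝ) : ℝ :=
  ∫ t in (0:ℝ)..s,
    if t = 0 then 0 else
      ((Real.exp t - 1) / t) * ((t / (m : ℝ)) / (1 - Real.exp (-t / (m : ℝ))) - 1)

end

/-
Comparing degrees over all `m`-friable polynomials of degree `k` gives `k p_k = ∑_{i<k} c_{k-i} p_i`
for their proportions `p_k`, where `c_j = 1` for `1 ≤ j ≤ m` and `c_j` is exponentially small for
`j > m`. This is a discrete form of `t ρ(t) = ∫_{t-1}^t ρ`: sampling `ρ` at the multiples of
`1/m - 1/(2m²)`, the trapezoid rule shows that the samples satisfy the same recurrence up to a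
second-order error, the shift of the mesh away from `1/m` cancelling the first-order one. Induction
on `k` then bounds the relative error by a multiple of `log(k/m + 1)/m + k L²/m³`, with
`L = log(n/m + 1)`. The induction closes because this bound increases with `k`, so averaging it over
the preceding `m` indices gains on it; Chebyshev's sum inequality makes that gain explicit, since
both the bound's defect and the weights `ρ` are monotone.
-/

open Finset in
theorem sum_mul_div_two_le_sum_mul_sub {g : ℕ → ℝ} {k m : ℕ} (hmk : m ≤ k)
    (hg : AntitoneOn g (Set.Iic k)) (hk : 0 ≤ g k) :
    (∑ i ∈ Ico (k - m) k, g i) * m / 2 ≤ ∑ i ∈ Ico (k - m) k, g i * (k - i) := by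
  rcases m.eq_zero_or_pos with rfl | hm
  · simp
  have hmono : MonovaryOn g (fun i : ℕ ↦ (k : ℝ) - i) (Ico (k - m) k) := by
    intro i hi j hj hij
    have hji : j < i := by
      have : (j : ℝ) < i := by linarith
      exact_mod_cast this
    exact hg (Finset.mem_Ico.1 hj).2.le (Finset.mem_Ico.1 hi).2.le hji.le
  have hsum : ∑ i ∈ Ico (k - m) k, ((k : ℝ) - i) = m * (m + 1) / 2 := by
    clear hk hg hmono hm
    induction m with
    | zero => simp
    | succ m ih =>
      rw [show k - m = k - (m + 1) + 1 by lia] at ih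
      rw [sum_eq_sum_Ico_succ_bot (by lia), ih (by lia), Nat.cast_sub hmk]
      push_cast
      ring
  have hcheb := hmono.sum_mul_sum_le_card_mul_sum
  rw [hsum, Nat.card_Ico, Nat.sub_sub_self hmk] at hcheb
  have hnonneg : 0 ≤ ∑ i ∈ Ico (k - m) k, g i := sum_nonneg fun i hi ↦
    hk.trans (hg (Finset.mem_Ico.1 hi).2.le Set.self_mem_Iic (Finset.mem_Ico.1 hi).2.le)
  have hm' : (0 : ℝ) < m := by exact_mod_cast hm
  refine le_of_mul_le_mul_left (le_trans ?_ hcheb) hm'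
  nlinarith

theorem sum_exp_neg_div_six_le (s : Finset ℕ) : ∑ j ∈ s, exp (-j / 6) ≤ 7 := by
  have hexp : ∀ j : ℕ, exp (-j / 6) = exp (-(1 / 6)) ^ j := fun j ↦ by
    rw [← exp_nat_mul]
    ring_nf
  have hle : exp (-(1 / 6)) ≤ 6 / 7 := by
    rw [exp_neg, inv_le_comm₀ (exp_pos _) (by norm_num)]
    linarith [add_one_le_exp (1 / 6 : ℝ)]
  simp only [hexp]
  calc ∑ j ∈ s, exp (-(1 / 6)) ^ j ≤ ∑' j : ℕ, exp (-(1 / 6)) ^ j :=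
        (summable_geometric_of_lt_one (exp_pos _).le (by linarith)).sum_le_tsum s
          fun _ _ ↦ by positivity
    _ = (1 - exp (-(1 / 6)))⁻¹ := tsum_geometric_of_lt_one (exp_pos _).le (by linarith)
    _ ≤ 7 := by
      rw [inv_le_comm₀ (by linarith) (by norm_num)]
      linarith

section Trapezoid

open Set MeasureTheory intervalIntegral

variable {f f' : ℝ → ℝ}

theorem integral_add_mul_sub (x y A B : ℝ) :
    ∫ s in x..y, (A + B * (s - x)) = (y - x) * A + B * (y - x) ^ 2 / 2 := by
  rw [integral_comp_sub_right (fun s ↦ A + B * s),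
    integral_add (by simp) (Continuous.intervalIntegrable (by fun_prop) _ _),
    intervalIntegral.integral_const_mul, integral_id, intervalIntegral.integral_const, smul_eq_mul]
  ring

theorem integral_le_trapezoid {x y : ℝ} (hxy : x ≤ y) (hf : IntervalIntegrable f volume x y)
    (hx : ∀ s ∈ Icc x y, f s + f' s * (x - s) ≤ f x)
    (hy : ∀ s ∈ Icc x y, f s + f' s * (y - s) ≤ f y) :
    ∫ s in x..y, f s ≤ (y - x) * (f x + f y) / 2 := by
  rcases hxy.eq_or_lt with rfl | hlt
  · simp
  have hchord : ∀ s ∈ Icc x y, f s ≤ f x + (f y - f x) / (y - x) * (s - x) := by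
    intro s hs
    have hmul : (y - x) * f s ≤ (y - x) * f x + (f y - f x) * (s - x) := by
      nlinarith [mul_le_mul_of_nonneg_left (hx s hs) (sub_nonneg.2 hs.2),
        mul_le_mul_of_nonneg_left (hy s hs) (sub_nonneg.2 hs.1)]
    have : 0 < y - x := sub_pos.2 hlt
    rw [← sub_nonneg] at hmul ⊢
    have e : f x + (f y - f x) / (y - x) * (s - x) - f s =
      ((y - x) * f x + (f y - f x) * (s - x) - (y - x) * f s) / (y - x) := by field_simp
    rw [e]
    positivity
  calc ∫ s in x..y, f s ≤ ∫ s in x..y, (f x + (f y - f x) / (y - x) * (s - x)) :=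
        integral_mono_on hxy hf (Continuous.intervalIntegrable (by fun_prop) _ _) hchord
    _ = (y - x) * (f x + f y) / 2 := by
      rw [integral_add_mul_sub]
      field_simp [(sub_pos.2 hlt).ne']
      ring

theorem trapezoid_sub_le_integral {x y d e : ℝ} (hxy : x ≤ y)
    (hf : IntervalIntegrable f volume x y) (hx : ∀ s ∈ Icc x y, f x + d * (s - x) ≤ f s)
    (hy : ∀ s ∈ Icc x y, f y + e * (s - y) ≤ f s) :
    (y - x) * (f x + f y) / 2 - (y - x) ^ 2 / 4 * (e - d) ≤ ∫ s in x..y, f s := by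
  calc (y - x) * (f x + f y) / 2 - (y - x) ^ 2 / 4 * (e - d)
      = ∫ s in x..y, ((f x + f y - e * (y - x)) / 2 + (d + e) / 2 * (s - x)) := by
        rw [integral_add_mul_sub]
        ring
    _ ≤ ∫ s in x..y, f s :=
        integral_mono_on hxy (Continuous.intervalIntegrable (by fun_prop) _ _) hf
          fun s hs ↦ by linarith [hx s hs, hy s hs]

theorem intervalIntegrable_Ico_step {m n k : ℕ} (hf : IntervalIntegrable f volume m n)
    (hk : k ∈ Ico m n) : IntervalIntegrable f volume (k : ℝ) (k + 1 : ℕ) := by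
  have hmk : (m : ℝ) ≤ k := by exact_mod_cast hk.1
  have hkn : ((k + 1 : ℕ) : ℝ) ≤ n := by exact_mod_cast hk.2
  have : (k : ℝ) ≤ (k + 1 : ℕ) := by simp
  refine hf.mono_set ?_
  rw [uIcc_of_le this, uIcc_of_le (by linarith)]
  exact Icc_subset_Icc hmk hkn

theorem sum_Ico_trapezoid {m n : ℕ} (hmn : m ≤ n) (f : ℝ → ℝ) :
    ∑ i ∈ Finset.Ico m n, (f i + f (i + 1 : ℕ)) / 2 =
      ∑ i ∈ Finset.Ico m n, f i + (f n - f m) / 2 := by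
  rw [← Finset.sum_Ico_sub (fun i : ℕ ↦ f i) hmn, Finset.sum_div, ← Finset.sum_add_distrib]
  exact Finset.sum_congr rfl fun i _ ↦ by ring

theorem sum_Ico_trapezoid_sub_integral_mem_Icc {m n : ℕ} (hmn : m ≤ n)
    (hf : IntervalIntegrable f volume m n)
    (htan : ∀ x ∈ Icc (m : ℝ) n, ∀ y ∈ Icc (m : ℝ) n, f x + f' x * (y - x) ≤ f y) :
    ∑ i ∈ Finset.Ico m n, f i + (f n - f m) / 2 - ∫ s in (m : ℝ)..n, f s ∈
      Icc 0 ((f' n - f' m) / 4) := by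
  have hstep : ∀ i ∈ Finset.Ico m n, (f i + f (i + 1 : ℕ)) / 2 -
      ∫ s in (i : ℝ)..(i + 1 : ℕ), f s ∈ Icc 0 ((f' (i + 1 : ℕ) - f' i) / 4) := by
    intro i hi
    rw [Finset.mem_Ico] at hi
    have hle : (i : ℝ) ≤ (i + 1 : ℕ) := by simp
    have hsub : Icc (i : ℝ) (i + 1 : ℕ) ⊆ Icc (m : ℝ) n :=
      Icc_subset_Icc (by exact_mod_cast hi.1) (by exact_mod_cast hi.2)
    have hint := intervalIntegrable_Ico_step hf hi
    have hl := hsub (left_mem_Icc.2 hle)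
    have hr := hsub (right_mem_Icc.2 hle)
    have hup := integral_le_trapezoid hle hint (fun s hs ↦ htan s (hsub hs) _ hl)
      (fun s hs ↦ htan s (hsub hs) _ hr)
    have hlo := trapezoid_sub_le_integral hle hint (fun s hs ↦ htan _ hl s (hsub hs))
      (fun s hs ↦ htan _ hr s (hsub hs))
    push_cast at hup hlo ⊢
    constructor <;> linarith
  rw [← sum_integral_adjacent_intervals_Ico (a := fun i ↦ (i : ℝ)) hmn
    (fun k hk ↦ intervalIntegrable_Ico_step hf hk), ← sum_Ico_trapezoid hmn,
    ← Finset.sum_sub_distrib, ← Finset.sum_Ico_sub (fun i : ℕ ↦ f' i) hmn, Finset.sum_div]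
  exact ⟨Finset.sum_nonneg fun i hi ↦ (hstep i hi).1, Finset.sum_le_sum fun i hi ↦ (hstep i hi).2⟩

end Trapezoid

theorem log_add_half_le {t : ℝ} (ht : 1 ≤ t) :
    log (t + 1 / 2) ≤ (1 - exp (-(8 * log (t + 1 / 2)) / 2)) * log (t + 1) := by
  have hexp : exp (-(8 * log (t + 1 / 2)) / 2) = ((t + 1 / 2) ^ 4)⁻¹ := by
    rw [show -(8 * log (t + 1 / 2)) / 2 = -log ((t + 1 / 2) ^ 4) by rw [log_pow]; push_cast; ring,
      exp_neg, exp_log (by positivity)]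
  have hgap : log (t + 1 / 2) + 1 / 2 / (t + 1) ≤ log (t + 1) := by
    have := log_le_sub_one_of_pos (show 0 < (t + 1 / 2) / (t + 1) by positivity)
    rw [log_div (by linarith) (by linarith)] at this
    have : 1 - (t + 1 / 2) / (t + 1) = 1 / 2 / (t + 1) := by field_simp; ring
    linarith
  have hdecay : ((t + 1 / 2) ^ 4)⁻¹ * log (t + 1) ≤ 1 / 2 / (t + 1) := by
    have hlog : log (t + 1) ≤ t := by linarith [log_le_sub_one_of_pos (show 0 < t + 1 by linarith)]
    refine (mul_le_mul_of_nonneg_left hlog (by positivity)).trans ?_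
    rw [inv_mul_eq_div, div_le_div_iff₀ (by positivity) (by linarith)]
    nlinarith [mul_le_mul (show t * (t + 1) ≤ (t + 1 / 2) ^ 2 by nlinarith)
      (show 2 ≤ (t + 1 / 2) ^ 2 by nlinarith) (by norm_num) (by positivity)]
  rw [hexp]
  linarith

namespace IsDickman

open Set intervalIntegral MeasureTheory

variable {ρ : ℝ → ℝ}

theorem continuousOn (h : IsDickman ρ) : ContinuousOn ρ (Ici 0) := h.1

theorem pos (h : IsDickman ρ) {t : ℝ} (ht : 0 ≤ t) : 0 < ρ t := h.2.1 t ht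

theorem eq_one (h : IsDickman ρ) {t : ℝ} (ht : 0 ≤ t) (ht' : t ≤ 1) : ρ t = 1 :=
  h.2.2.1 t ⟨ht, ht'⟩

theorem hasDerivAt (h : IsDickman ρ) {t : ℝ} (ht : 1 < t) : HasDerivAt ρ (-ρ (t - 1) / t) t :=
  h.2.2.2 t ht

theorem intervalIntegrable (h : IsDickman ρ) {a b : ℝ} (ha : 0 ≤ a) (hb : 0 ≤ b) :
    IntervalIntegrable ρ volume a b :=
  (h.continuousOn.mono fun _ hs ↦ (le_min ha hb).trans hs.1).intervalIntegrable

theorem antitoneOn (h : IsDickman ρ) : AntitoneOn ρ (Ici 0) := by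
  have hanti : AntitoneOn ρ (Ici 1) := by
    refine antitoneOn_of_deriv_nonpos (convex_Ici 1)
      (h.continuousOn.mono (Ici_subset_Ici.2 zero_le_one)) ?_ ?_ <;>
      intro t ht <;> rw [interior_Ici, mem_Ioi] at ht
    · exact (h.hasDerivAt ht).differentiableAt.differentiableWithinAt
    · rw [(h.hasDerivAt ht).deriv, neg_div]
      exact neg_nonpos.2 (div_nonneg (h.pos (by linarith)).le (by linarith))
  intro x hx y hy hxy
  rw [mem_Ici] at hx hy
  rcases le_total 1 x with h1x | hx1
  · exact hanti h1x (h1x.trans hxy) hxy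
  rcases le_total 1 y with h1y | hy1
  · rw [h.eq_one hx hx1, ← h.eq_one zero_le_one le_rfl]
    exact hanti self_mem_Ici h1y h1y
  · rw [h.eq_one hx hx1, h.eq_one hy hy1]

theorem le_one (h : IsDickman ρ) {t : ℝ} (ht : 0 ≤ t) : ρ t ≤ 1 :=
  (h.antitoneOn self_mem_Ici ht ht).trans_eq (h.eq_one le_rfl zero_le_one)

theorem div_antitoneOn (h : IsDickman ρ) : AntitoneOn (fun t ↦ ρ (t - 1) / t) (Ici 1) := by
  intro x hx y hy hxy
  rw [mem_Ici] at hx hy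
  have hx' : 0 ≤ x - 1 := by linarith
  exact div_le_div₀ (h.pos hx').le
    (h.antitoneOn hx' (show (0 : ℝ) ≤ y - 1 by linarith) (by linarith)) (by linarith) hxy

theorem tangent_le (h : IsDickman ρ) {x y : ℝ} (hx : 1 ≤ x) (hy : 1 ≤ y) :
    ρ x - ρ (x - 1) / x * (y - x) ≤ ρ y := by
  have hmvt : ∀ {a b : ℝ}, 1 ≤ a → a < b →
      ∃ c ∈ Ioo a b, ρ b - ρ a = -(ρ (c - 1) / c * (b - a)) := by
    intro a b ha hab
    obtain ⟨c, hc, hslope⟩ := exists_hasDerivAt_eq_slope ρ (fun t ↦ -ρ (t - 1) / t) hab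
      (h.continuousOn.mono fun z hz ↦ by rw [mem_Ici]; linarith [hz.1])
      (fun z hz ↦ h.hasDerivAt (by linarith [hz.1]))
    refine ⟨c, hc, ?_⟩
    rw [eq_div_iff (by linarith), neg_div] at hslope
    linarith
  rcases lt_trichotomy x y with hxy | rfl | hyx
  · obtain ⟨c, hc, hmvt⟩ := hmvt hx hxy
    have := mul_le_mul_of_nonneg_right (h.div_antitoneOn hx (hx.trans hc.1.le) hc.1.le)
      (sub_nonneg.2 hxy.le)
    linarith
  · simp
  · obtain ⟨c, hc, hmvt⟩ := hmvt hy hyx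
    have := mul_le_mul_of_nonneg_right (h.div_antitoneOn (hy.trans hc.1.le) hx hc.2.le)
      (sub_nonneg.2 hyx.le)
    linarith

theorem mul_self_eq_integral (h : IsDickman ρ) {t : ℝ} (ht : 1 ≤ t) :
    t * ρ t = ∫ s in (t - 1)..t, ρ s := by
  have hint : ∀ {a b : ℝ}, 0 ≤ a → 0 ≤ b → IntervalIntegrable ρ volume a b := h.intervalIntegrable
  have hshift : IntervalIntegrable (fun s ↦ ρ (s - 1)) volume 1 t := by
    simpa using (hint le_rfl (sub_nonneg.2 ht)).comp_sub_right 1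
  have hderiv : ∀ s ∈ Ioo 1 t, HasDerivAt (fun s ↦ s * ρ s) (ρ s - ρ (s - 1)) s := by
    intro s hs
    have hs0 : s ≠ 0 := by linarith [hs.1]
    refine ((hasDerivAt_id s).mul (h.hasDerivAt hs.1)).congr_deriv ?_
    rw [id, mul_div_cancel₀ _ hs0]
    ring
  have hftc := integral_eq_sub_of_hasDerivAt_of_le (f := fun s ↦ s * ρ s) ht
    (continuousOn_id.mul (h.continuousOn.mono fun s hs ↦ zero_le_one.trans hs.1)) hderiv
    ((hint zero_le_one (by linarith)).sub hshift)
  have hone : ∫ s in (0 : ℝ)..1, ρ s = 1 := by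
    rw [integral_congr (g := fun _ ↦ (1 : ℝ)) fun s hs ↦ ?_, integral_one, sub_zero]
    rw [uIcc_of_le zero_le_one] at hs
    exact h.eq_one hs.1 hs.2
  rw [intervalIntegral.integral_sub (hint zero_le_one (by linarith)) hshift,
    integral_comp_sub_right, sub_self, h.eq_one zero_le_one le_rfl, mul_one] at hftc
  have hleft := integral_add_adjacent_intervals (hint le_rfl zero_le_one)
    (hint zero_le_one (by linarith : 0 ≤ t))
  have hright := integral_add_adjacent_intervals (hint le_rfl (sub_nonneg.2 ht))
    (hint (sub_nonneg.2 ht) (by linarith : 0 ≤ t))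
  linarith

theorem le_mul_exp_of_forall_le (h : IsDickman ρ) {a b c : ℝ} (hc : 0 ≤ c)
    (hratio : ∀ s, 1 < s → s ≤ b → ρ (s - 1) ≤ c * s * ρ s) (ha : 0 ≤ a) (hab : a ≤ b) :
    ρ a ≤ ρ b * exp (c * (b - a)) := by
  have hderiv : ∀ s, 1 < s → HasDerivAt (fun s ↦ ρ s * exp (c * s))
      (-ρ (s - 1) / s * exp (c * s) + ρ s * (exp (c * s) * c)) s := fun s hs ↦
    (h.hasDerivAt hs).mul (by simpa using ((hasDerivAt_id s).const_mul c).exp)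
  have hmono : MonotoneOn (fun s ↦ ρ s * exp (c * s)) (Icc 1 b) := by
    refine monotoneOn_of_deriv_nonneg (convex_Icc _ _)
      ((h.continuousOn.mono fun s hs ↦ zero_le_one.trans hs.1).mul (by fun_prop)) ?_ ?_ <;>
      intro s hs <;> rw [interior_Icc] at hs
    · exact (hderiv s hs.1).differentiableAt.differentiableWithinAt
    · have hquot : ρ (s - 1) / s ≤ c * ρ s := by
        rw [div_le_iff₀ (by linarith [hs.1])]
        linarith [hratio s hs.1 hs.2.le]
      rw [(hderiv s hs.1).deriv, neg_div]
      nlinarith [exp_pos (c * s)]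
  have hexp : ∀ {x}, x ≤ b → 1 ≤ x → ρ x ≤ ρ b * exp (c * (b - x)) := by
    intro x hxb hx
    have := hmono ⟨hx, hxb⟩ ⟨hx.trans hxb, le_rfl⟩ hxb
    rw [mul_sub, exp_sub, ← mul_div_assoc, le_div_iff₀ (exp_pos _)]
    exact this
  rcases le_total 1 a with h1a | ha1
  · exact hexp hab h1a
  rw [h.eq_one ha ha1]
  rcases le_total 1 b with h1b | hb1
  · rw [← h.eq_one zero_le_one le_rfl]
    refine (hexp h1b le_rfl).trans ?_
    have := h.pos (zero_le_one.trans h1b)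
    gcongr
  · rw [h.eq_one (ha.trans hab) hb1, one_mul]
    exact one_le_exp (mul_nonneg hc (sub_nonneg.2 hab))

theorem mul_one_sub_exp_le (h : IsDickman ρ) {c t : ℝ} (hc : 0 < c) (ht : 1 ≤ t)
    (hratio : ∀ s, 1 < s → s ≤ t - 1 / 2 → ρ (s - 1) ≤ c * s * ρ s) :
    ρ (t - 1) * (1 - exp (-c / 2)) ≤ c * t * ρ t := by
  have hlower : ∀ s ∈ Icc (t - 1) (t - 1 / 2), ρ (t - 1) * exp (-c * (s - (t - 1))) ≤ ρ s := by
    intro s hs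
    have := h.le_mul_exp_of_forall_le hc.le (fun r hr hrs ↦ hratio r hr (hrs.trans hs.2))
      (sub_nonneg.2 ht) hs.1
    rwa [neg_mul, exp_neg, ← div_eq_mul_inv, div_le_iff₀ (exp_pos _)]
  have hexp : ∫ s in (t - 1)..(t - 1 / 2), ρ (t - 1) * exp (-c * (s - (t - 1))) =
      ρ (t - 1) * ((1 - exp (-c / 2)) / c) := by
    rw [intervalIntegral.integral_const_mul,
      integral_comp_sub_right (fun s ↦ exp (-c * s)) (t - 1),
      integral_comp_mul_left exp (neg_ne_zero.2 hc.ne'), integral_exp, sub_self, mul_zero, exp_zero,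
      show -c * (t - 1 / 2 - (t - 1)) = -c / 2 by ring, smul_eq_mul]
    field_simp
    ring
  have hhalf : ∫ s in (t - 1)..(t - 1 / 2), ρ s ≤ ∫ s in (t - 1)..t, ρ s := by
    refine integral_mono_interval le_rfl (by linarith) (by linarith) ?_
      (h.intervalIntegrable (by linarith) (by linarith))
    filter_upwards [ae_restrict_mem measurableSet_Ioc] with s hs
    exact (h.pos (by linarith [hs.1])).le
  have hbound := (integral_mono_on (by linarith)
    (Continuous.intervalIntegrable (by fun_prop) _ _)
    (h.intervalIntegrable (by linarith) (by linarith)) hlower).trans hhalf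
  rw [hexp, ← h.mul_self_eq_integral ht, ← mul_div_assoc, div_le_iff₀ hc] at hbound
  linarith

theorem sub_one_le_mul (h : IsDickman ρ) {t : ℝ} (ht : 1 ≤ t) :
    ρ (t - 1) ≤ 8 * log (t + 1) * t * ρ t := by
  suffices hind : ∀ (j : ℕ) (t : ℝ), 1 ≤ t → t ≤ 1 + j / 2 →
      ρ (t - 1) ≤ 8 * log (t + 1) * t * ρ t by
    exact hind ⌈2 * t⌉₊ t ht (by linarith [Nat.le_ceil (2 * t)])
  clear! t
  intro j
  induction j with
  | zero =>
    intro t h1 h2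
    obtain rfl : t = 1 := le_antisymm (by simpa using h2) h1
    have hlog := log_two_gt_d9
    norm_num [h.eq_one le_rfl zero_le_one, h.eq_one zero_le_one le_rfl]
    linarith
  | succ j ih =>
    intro t h1 h2
    push_cast at h2
    have hlog : 0 < log (t + 1 / 2) := log_pos (by linarith)
    have hstep := h.mul_one_sub_exp_le (c := 8 * log (t + 1 / 2)) (by positivity) h1
      fun s hs hst ↦ by
        have := h.pos (by linarith : 0 ≤ s)
        have := log_le_log (by linarith) (by linarith : s + 1 ≤ t + 1 / 2)
        refine (ih s hs.le (by linarith)).trans ?_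
        gcongr
    refine le_of_mul_le_mul_right ?_ hlog
    calc ρ (t - 1) * log (t + 1 / 2)
        ≤ ρ (t - 1) * ((1 - exp (-(8 * log (t + 1 / 2)) / 2)) * log (t + 1)) :=
          mul_le_mul_of_nonneg_left (log_add_half_le h1) (h.pos (by linarith)).le
      _ = ρ (t - 1) * (1 - exp (-(8 * log (t + 1 / 2)) / 2)) * log (t + 1) := by ring
      _ ≤ 8 * log (t + 1 / 2) * t * ρ t * log (t + 1) :=
          mul_le_mul_of_nonneg_right hstep (log_nonneg (by linarith))
      _ = 8 * log (t + 1) * t * ρ t * log (t + 1 / 2) := by ring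

theorem le_mul_exp (h : IsDickman ρ) {L a b : ℝ} (hL : log (b + 1) ≤ L) (ha : 0 ≤ a)
    (hab : a ≤ b) : ρ a ≤ ρ b * exp (8 * L * (b - a)) := by
  have hL0 : 0 ≤ L := (log_nonneg (by linarith)).trans hL
  refine h.le_mul_exp_of_forall_le (by positivity) (fun s hs hsb ↦ ?_) ha hab
  have := h.pos (by linarith : 0 ≤ s)
  have hlog : log (s + 1) ≤ L := (log_le_log (by linarith) (by linarith)).trans hL
  refine (h.sub_one_le_mul hs.le).trans ?_
  gcongr

end IsDickman

theorem sum_Ico_sub_integral_mem_Icc {f : ℝ → ℝ} {m n : ℕ} (hmn : m ≤ n)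
    (hf : AntitoneOn f (Set.Icc m n)) :
    ∑ i ∈ Finset.Ico m n, f i - ∫ s in (m : ℝ)..n, f s ∈ Set.Icc 0 (f m - f n) := by
  have hshift := Finset.sum_Ico_sub (fun i : ℕ ↦ f i) hmn
  rw [Finset.sum_sub_distrib] at hshift
  constructor <;> linarith [hf.integral_le_sum_Ico hmn, hf.sum_le_integral_Ico hmn]

/-- The sampling step `1/m - 1/(2m²)`: the proportion of `m`-friable polynomials of degree `k` is
compared with `ρ (mesh m * k)`. -/
noncomputable def mesh (m : ℕ) : ℝ := 1 / m - 1 / (2 * (m : ℝ) ^ 2)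

section Mesh

variable {m : ℕ}

theorem mesh_mul_self (hm : 1 ≤ m) : mesh m * m = 1 - 1 / (2 * m) := by
  have : (m : ℝ) ≠ 0 := by positivity
  rw [mesh]
  field_simp

theorem mesh_div_two (m : ℕ) : mesh m / 2 = 1 / (2 * m) - (1 / (2 * m)) ^ 2 := by
  rw [mesh]
  ring

theorem mesh_le (m : ℕ) : mesh m ≤ 1 / m := sub_le_self _ (by positivity)

theorem one_div_two_mul_le_mesh (hm : 1 ≤ m) : 1 / (2 * m) ≤ mesh m := by
  have hm' : (1 : ℝ) ≤ m := by exact_mod_cast hm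
  rw [mesh, le_sub_iff_add_le, div_add_div _ _ (by positivity) (by positivity),
    div_le_div_iff₀ (by positivity) (by positivity)]
  nlinarith

theorem mesh_pos (hm : 1 ≤ m) : 0 < mesh m :=
  (by positivity : (0 : ℝ) < 1 / (2 * m)).trans_le (one_div_two_mul_le_mesh hm)

theorem mesh_mul_le_div (m k : ℕ) : mesh m * k ≤ k / m :=
  (mul_le_mul_of_nonneg_right (mesh_le m) k.cast_nonneg).trans_eq (by ring)

theorem one_le_mesh_mul {k : ℕ} (hm : 1 ≤ m) (hk : m + 1 ≤ k) : 1 ≤ mesh m * k := by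
  have hk' : (m + 1 : ℝ) ≤ k := by exact_mod_cast hk
  nlinarith [mesh_mul_self hm, one_div_two_mul_le_mesh hm]

end Mesh

namespace IsDickman

open Set intervalIntegral MeasureTheory

variable {ρ : ℝ → ℝ}

theorem integral_mem_Icc (h : IsDickman ρ) {t b : ℝ} (ht : 1 ≤ t) (hb : 0 ≤ b) :
    ∫ s in (t - 1 + b)..t, ρ s ∈
      Icc (t * ρ t - b * ρ (t - 1)) (t * ρ t - b * ρ (t - 1 + b)) := by
  have hint : ∀ {x y : ℝ}, 0 ≤ x → 0 ≤ y → IntervalIntegrable ρ volume x y := h.intervalIntegrable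
  have hadd := integral_add_adjacent_intervals (a := t - 1) (b := t - 1 + b) (c := t)
    (hint (by linarith) (by linarith)) (hint (by linarith) (by linarith))
  have hupper : ∫ s in (t - 1)..(t - 1 + b), ρ s ≤ ∫ _ in (t - 1)..(t - 1 + b), ρ (t - 1) :=
    integral_mono_on (by linarith) (hint (by linarith) (by linarith)) (by simp) fun s hs ↦
      h.antitoneOn (sub_nonneg.2 ht) ((sub_nonneg.2 ht).trans hs.1) hs.1
  have hlower : ∫ _ in (t - 1)..(t - 1 + b), ρ (t - 1 + b) ≤ ∫ s in (t - 1)..(t - 1 + b), ρ s :=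
    integral_mono_on (by linarith) (by simp) (hint (by linarith) (by linarith)) fun s hs ↦
      h.antitoneOn ((sub_nonneg.2 ht).trans hs.1)
        (add_nonneg (sub_nonneg.2 ht) hb) hs.2
  rw [intervalIntegral.integral_const, add_sub_cancel_left, smul_eq_mul] at hupper hlower
  rw [h.mul_self_eq_integral ht, ← hadd]
  constructor <;> linarith

variable {m k : ℕ}

theorem mesh_mul_integral_mem_Icc (h : IsDickman ρ) (hm : 1 ≤ m) (hk : m + 1 ≤ k) :
    mesh m * ∫ s in ((k - m : ℕ) : ℝ)..k, ρ (mesh m * s) ∈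
      Icc (mesh m * k * ρ (mesh m * k) - 1 / (2 * m) * ρ (mesh m * k - 1))
        (mesh m * k * ρ (mesh m * k) - 1 / (2 * m) * ρ (mesh m * (k - m : ℕ))) := by
  have hstart : mesh m * (k - m : ℕ) = mesh m * k - 1 + 1 / (2 * m) := by
    rw [Nat.cast_sub (by lia), mul_sub, mesh_mul_self hm]
    ring
  rw [mul_integral_comp_mul_left, hstart]
  exact h.integral_mem_Icc (one_le_mesh_mul hm hk) (by positivity)

theorem antitoneOn_mesh (h : IsDickman ρ) (hm : 1 ≤ m) :
    AntitoneOn (fun s ↦ ρ (mesh m * s)) (Ici 0) :=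
  fun _ hx _ hy hxy ↦ h.antitoneOn (mul_nonneg (mesh_pos hm).le hx)
    (mul_nonneg (mesh_pos hm).le hy) (mul_le_mul_of_nonneg_left hxy (mesh_pos hm).le)

theorem abs_sum_mesh_sub_le_one (h : IsDickman ρ) (hm : 1 ≤ m) (hk : m + 1 ≤ k) :
    |∑ i ∈ Finset.Ico (k - m) k, ρ (mesh m * i) - k * ρ (mesh m * k)| ≤ 1 := by
  have hT := one_le_mesh_mul hm hk
  have hstart : 0 ≤ mesh m * (k - m : ℕ) := mul_nonneg (mesh_pos hm).le (Nat.cast_nonneg _)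
  obtain ⟨hint, hint'⟩ := h.mesh_mul_integral_mem_Icc hm hk
  obtain ⟨hsum, hsum'⟩ := sum_Ico_sub_integral_mem_Icc (k.sub_le m)
    ((h.antitoneOn_mesh hm).mono fun x hx ↦ (Nat.cast_nonneg (k - m)).trans hx.1)
  have hb : 1 / (2 * m) * ρ (mesh m * k - 1) ≤ mesh m :=
    (mul_le_of_le_one_right (by positivity) (h.le_one (sub_nonneg.2 hT))).trans
      (one_div_two_mul_le_mesh hm)
  have hb' : 0 ≤ 1 / (2 * m) * ρ (mesh m * (k - m : ℕ)) :=
    mul_nonneg (by positivity) (h.pos hstart).le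
  have hdrop : ρ (mesh m * (k - m : ℕ)) - ρ (mesh m * k) ≤ 1 := by
    linarith [h.le_one hstart, h.pos (zero_le_one.trans hT)]
  rw [abs_le]
  constructor <;> refine le_of_mul_le_mul_left ?_ (mesh_pos hm)
  · linarith [mul_nonneg (mesh_pos hm).le hsum]
  · linarith [mul_le_mul_of_nonneg_left (hsum'.trans hdrop) (mesh_pos hm).le]

theorem mesh_tangent_le (h : IsDickman ρ) {x y : ℝ} (hx : 1 ≤ mesh m * x)
    (hy : 1 ≤ mesh m * y) : ρ (mesh m * x) +
      -(mesh m * (ρ (mesh m * x - 1) / (mesh m * x))) * (y - x) ≤ ρ (mesh m * y) :=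
  (by ring : _ = _).trans_le (h.tangent_le hx hy)

theorem mesh_trapezoid_mem_Icc (h : IsDickman ρ) (hm : 1 ≤ m) (hmk : m ≤ k)
    (hT : 2 ≤ mesh m * k) :
    ∑ i ∈ Finset.Ico (k - m) k, ρ (mesh m * i) +
        (ρ (mesh m * k) - ρ (mesh m * (k - m : ℕ))) / 2 -
        ∫ s in ((k - m : ℕ) : ℝ)..k, ρ (mesh m * s) ∈
      Icc 0 (mesh m * (ρ (mesh m * k - 2) / (mesh m * k - 1)) / 4) := by
  have hmesh := mesh_pos hm
  have hstart : mesh m * k - 1 ≤ mesh m * (k - m : ℕ) := by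
    rw [Nat.cast_sub hmk, mul_sub, mesh_mul_self hm]
    linarith [(by positivity : 0 < 1 / (2 * m : ℝ))]
  have hrange : ∀ x ∈ Icc ((k - m : ℕ) : ℝ) k, 1 ≤ mesh m * x := fun x hx ↦
    (by linarith : 1 ≤ mesh m * (k - m : ℕ)).trans (mul_le_mul_of_nonneg_left hx.1 hmesh.le)
  obtain ⟨hlower, hupper⟩ := sum_Ico_trapezoid_sub_integral_mem_Icc (k.sub_le m)
    (((h.antitoneOn_mesh hm).mono fun x hx ↦
      (le_min (Nat.cast_nonneg _) (Nat.cast_nonneg _)).trans hx.1).intervalIntegrable)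
    fun x hx y hy ↦ h.mesh_tangent_le (hrange x hx) (hrange y hy)
  refine ⟨hlower, hupper.trans ?_⟩
  have hslope : ρ (mesh m * (k - m : ℕ) - 1) / (mesh m * (k - m : ℕ)) ≤
      ρ (mesh m * k - 1 - 1) / (mesh m * k - 1) :=
    h.div_antitoneOn (by rw [mem_Ici]; linarith) (by rw [mem_Ici]; linarith) hstart
  rw [show mesh m * k - 1 - 1 = mesh m * k - 2 by ring] at hslope
  have hend : 0 ≤ mesh m * (ρ (mesh m * k - 1) / (mesh m * k)) :=
    mul_nonneg hmesh.le (div_nonneg (h.pos (by linarith)).le (by linarith))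
  linarith [mul_le_mul_of_nonneg_left hslope hmesh.le]

theorem sum_mesh_sub_mem_Icc (h : IsDickman ρ) (hm : 1 ≤ m) (hk : m + 1 ≤ k)
    (hT : 2 ≤ mesh m * k) :
    ∑ i ∈ Finset.Ico (k - m) k, ρ (mesh m * i) - k * ρ (mesh m * k) ∈
      Icc (-(ρ (mesh m * k) / 2) -
          1 / (2 * m) * (ρ (mesh m * k - 2) / (mesh m * k - 1) + ρ (mesh m * k - 1)))
        (1 / (4 * m) * (ρ (mesh m * k - 2) / (mesh m * k - 1))) := by
  have hmesh := mesh_pos hm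
  have hstart : mesh m * (k - m : ℕ) = mesh m * k - 1 + 1 / (2 * m) := by
    rw [Nat.cast_sub (by lia), mul_sub, mesh_mul_self hm]
    ring
  obtain ⟨hint, hint'⟩ := h.mesh_mul_integral_mem_Icc hm hk
  obtain ⟨htrap, htrap'⟩ := h.mesh_trapezoid_mem_Icc hm (by lia) hT
  have hmeshb := one_div_two_mul_le_mesh hm
  have hmeshb' := mesh_div_two m
  have hmesh_le : mesh m / 4 ≤ 1 / (4 * m) :=
    (div_le_div_of_nonneg_right (mesh_le m) (by norm_num)).trans_eq (by ring)
  have hb : 0 < 1 / (2 * m : ℝ) := by positivity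
  set b : ℝ := 1 / (2 * m)
  rw [hstart] at hint' htrap htrap'
  set D := ρ (mesh m * k - 2) / (mesh m * k - 1)
  have hD : 0 ≤ D := div_nonneg (h.pos (by linarith)).le (by linarith)
  have htangent : ρ (mesh m * k - 1) - ρ (mesh m * k - 1 + b) ≤ b * D := by
    have := h.tangent_le (by linarith : 1 ≤ mesh m * k - 1)
      (by linarith : 1 ≤ mesh m * k - 1 + b)
    rw [show mesh m * k - 1 - 1 = mesh m * k - 2 by ring] at this
    linarith
  have hanti : ρ (mesh m * k - 1 + b) ≤ ρ (mesh m * k - 1) :=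
    h.antitoneOn (by rw [mem_Ici]; linarith) (by rw [mem_Ici]; linarith) (by linarith)
  have hρb := h.pos (by linarith : 0 ≤ mesh m * k - 1 + b)
  have hρ := h.pos (by linarith : 0 ≤ mesh m * k)
  constructor <;> refine le_of_mul_le_mul_left ?_ hmesh
  · nlinarith [mul_nonneg hmesh.le htrap, mul_le_mul_of_nonneg_left htangent hb.le,
      mul_le_mul_of_nonneg_left hanti (sq_nonneg b),
      mul_le_mul_of_nonneg_right hmeshb (mul_nonneg hb.le (add_nonneg hD (hρb.le.trans hanti)))]
  · nlinarith [mul_le_mul_of_nonneg_left htrap' hmesh.le, mul_nonneg (sq_nonneg b) hρb.le,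
      mul_nonneg hmesh.le hρ.le,
      mul_le_mul_of_nonneg_right hmesh_le (mul_nonneg hmesh.le hD)]

theorem sub_two_div_le (h : IsDickman ρ) {t L : ℝ} (ht : 2 ≤ t) (hL : log (t + 1) ≤ L) :
    ρ (t - 2) / (t - 1) ≤ 8 * L * ρ (t - 1) := by
  have hratio := h.sub_one_le_mul (by linarith : 1 ≤ t - 1)
  rw [show t - 1 - 1 = t - 2 by ring, sub_add_cancel] at hratio
  have hlog : log t ≤ L := (log_le_log (by linarith) (by linarith)).trans hL
  have hpos := h.pos (by linarith : 0 ≤ t - 1)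
  have ht' : 0 ≤ t - 1 := by linarith
  rw [div_le_iff₀ (by linarith)]
  calc ρ (t - 2) ≤ 8 * log t * (t - 1) * ρ (t - 1) := hratio
    _ ≤ 8 * L * (t - 1) * ρ (t - 1) := by gcongr
    _ = 8 * L * ρ (t - 1) * (t - 1) := by ring

theorem abs_sum_mesh_sub_le_of_two_le (h : IsDickman ρ) (hm : 1 ≤ m) (hk : m + 1 ≤ k)
    (hT : 2 ≤ mesh m * k) {L : ℝ} (hL : log (mesh m * k + 1) ≤ L) :
    |∑ i ∈ Finset.Ico (k - m) k, ρ (mesh m * i) - k * ρ (mesh m * k)| ≤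
      ρ (mesh m * k) / 2 + 40 * (k * L ^ 2 / m ^ 2 * ρ (mesh m * k)) := by
  obtain ⟨hlower, hupper⟩ := h.sum_mesh_sub_mem_Icc hm hk hT
  have htwo := h.sub_two_div_le hT hL
  have hone := h.sub_one_le_mul (by linarith : 1 ≤ mesh m * k)
  have hle := mesh_mul_le_div m k
  generalize mesh m * k = T at *
  have hρ := h.pos (by linarith : 0 ≤ T)
  have hρ₁ := h.pos (by linarith : 0 ≤ T - 1)
  have hρ₂ : 0 ≤ ρ (T - 2) / (T - 1) := div_nonneg (h.pos (by linarith)).le (by linarith)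
  have hhalf : 1 / 2 ≤ L := by
    linarith [log_two_gt_d9, log_le_log two_pos (by linarith : 2 ≤ T + 1)]
  replace hone : ρ (T - 1) ≤ 8 * L * (k / m) * ρ T := hone.trans (by gcongr)
  have hsum : ρ (T - 2) / (T - 1) + ρ (T - 1) ≤ 80 * L ^ 2 * (k / m) * ρ T := by
    nlinarith [mul_le_mul_of_nonneg_left hone (by linarith : 0 ≤ 10 * L)]
  have hsmall : 1 / (2 * m) * (ρ (T - 2) / (T - 1) + ρ (T - 1)) ≤
      40 * (k * L ^ 2 / m ^ 2 * ρ T) := by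
    calc _ ≤ 1 / (2 * m) * (80 * L ^ 2 * (k / m) * ρ T) := by gcongr
      _ = 40 * (k * L ^ 2 / m ^ 2 * ρ T) := by ring
  have hquarter : 1 / (4 * m) * (ρ (T - 2) / (T - 1)) ≤
      1 / (2 * m) * (ρ (T - 2) / (T - 1) + ρ (T - 1)) := by
    gcongr
    · norm_num
    · linarith
  rw [abs_le]
  constructor <;> linarith

theorem abs_sum_mesh_sub_le (h : IsDickman ρ) (hm : 1 ≤ m) (hk : m + 1 ≤ k) {L : ℝ}
    (hL : log (mesh m * k + 1) ≤ L) :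
    |∑ i ∈ Finset.Ico (k - m) k, ρ (mesh m * i) - k * ρ (mesh m * k)| ≤
      40 * (1 + k * L ^ 2 / m ^ 2) * ρ (mesh m * k) := by
  have hT₀ := zero_le_one.trans (one_le_mesh_mul hm hk)
  have hρ := h.pos hT₀
  rcases le_total (mesh m * k) 2 with hT | hT
  · have hlog : log 3 ≤ 2 := by linarith [log_le_sub_one_of_pos (show (0 : ℝ) < 3 by norm_num)]
    have htwo := h.sub_one_le_mul one_le_two
    norm_num [h.eq_one zero_le_one le_rfl] at htwo
    have hanti : ρ 2 ≤ ρ (mesh m * k) := h.antitoneOn hT₀ (mem_Ici.2 zero_le_two) hT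
    have : 0 ≤ k * L ^ 2 / m ^ 2 * ρ (mesh m * k) := by positivity
    refine (h.abs_sum_mesh_sub_le_one hm hk).trans ?_
    nlinarith [mul_le_mul_of_nonneg_right hlog (h.pos zero_le_two).le]
  · linarith [h.abs_sum_mesh_sub_le_of_two_le hm hk hT hL]

end IsDickman

/-- The recurrence satisfied by the proportions `p k` of `m`-friable monic polynomials of degree
`k`; it mimics the averaging identity `t * ρ t = ∫ s in (t - 1)..t, ρ s` of the Dickman function.
The decay rate `1 / 3` is any convenient number below `log 2 / 2`. -/
structure DickmanRecurrence (m : ℕ) (c p : ℕ → ℝ) : Prop where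
  coeff_nonneg : ∀ j, 0 ≤ c j
  coeff_eq_one : ∀ j, 1 ≤ j → j ≤ m → c j = 1
  coeff_le : ∀ j, m < j → c j ≤ 2 * exp (-j / 3)
  eq_one : ∀ k ≤ m, p k = 1
  recurrence : ∀ k : ℕ, k * p k = ∑ i ∈ Finset.range k, c (k - i) * p i

/-- The relative error, propagated by induction on `k`, of the approximation of `p k` by
`ρ (mesh m * k)`. -/
noncomputable def relError (m : ℕ) (L : ℝ) (k : ℕ) : ℝ :=
  500 * (log (k / m + 1) / m + k * L ^ 2 / m ^ 3)

/-- A lower bound for the increments of `relError m L` up to `k`. -/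
noncomputable def relErrorStep (m : ℕ) (L : ℝ) (k : ℕ) : ℝ :=
  500 * (1 / (m * (m + k)) + L ^ 2 / m ^ 3)

section RelError

variable {m k n : ℕ} {L : ℝ}

theorem relError_mono (hkn : k ≤ n) : relError m L k ≤ relError m L n := by
  have : (k : ℝ) ≤ n := by exact_mod_cast hkn
  rw [relError, relError]
  gcongr

theorem relError_nonneg (m : ℕ) (L : ℝ) (k : ℕ) : 0 ≤ relError m L k := by
  have : 0 ≤ log (k / m + 1 : ℝ) := log_nonneg (le_add_of_nonneg_left (by positivity))
  rw [relError]
  positivity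

theorem relErrorStep_nonneg (m : ℕ) (L : ℝ) (k : ℕ) : 0 ≤ relErrorStep m L k := by
  rw [relErrorStep]
  positivity

theorem relError_le_sub (hm : 1 ≤ m) (i k : ℕ) :
    relError m L i ≤ relError m L k - (k - i) * relErrorStep m L k := by
  have hm' : (0 : ℝ) < m := by exact_mod_cast hm
  have hlog : log (i / m + 1 : ℝ) ≤ log (k / m + 1) - (k - i) / (m + k) := by
    have := log_le_sub_one_of_pos (by positivity : 0 < (i / m + 1 : ℝ) / (k / m + 1))
    rw [log_div (by positivity) (by positivity),
      show (i / m + 1 : ℝ) / (k / m + 1) - 1 = -((k - i) / (m + k)) by field_simp; ring] at this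
    linarith
  have hlog' := div_le_div_of_nonneg_right hlog hm'.le
  rw [sub_div, div_div, mul_comm (m + k : ℝ)] at hlog'
  rw [relError, relError, relErrorStep]
  linear_combination 500 * hlog'

theorem relErrorStep_mul_half_le (hm : 1 ≤ m) (hmk : m ≤ k) :
    relErrorStep m L k * m / 2 ≤ relError m L k := by
  have := relError_le_sub (L := L) hm (k - m) k
  rw [Nat.cast_sub hmk, sub_sub_cancel] at this
  have hstep := relErrorStep_nonneg m L k
  have : 0 ≤ relErrorStep m L k * m := by positivity
  linarith [relError_nonneg m L (k - m)]

theorem le_mul_relErrorStep (hm : 1 ≤ m) (hmk : m ≤ k) :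
    108 * (1 + k * L ^ 2 / m ^ 2) ≤ k * (relErrorStep m L k * m / 2) := by
  have hm' : (0 : ℝ) < m := by exact_mod_cast hm
  have hmk' : (m : ℝ) ≤ k := by exact_mod_cast hmk
  have hhalf : 1 / 2 ≤ (k : ℝ) / (m + k) := by
    rw [div_le_div_iff₀ two_pos (by linarith)]
    linarith
  have hexpand : k * (relErrorStep m L k * m / 2) = 250 * (k / (m + k) + k * L ^ 2 / m ^ 2) := by
    rw [relErrorStep]
    field_simp
    ring
  have : 0 ≤ k * L ^ 2 / (m : ℝ) ^ 2 := by positivity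
  linarith

end RelError

section Recurrence

variable {ρ : ℝ → ℝ} {c p : ℕ → ℝ} {m k : ℕ} {L : ℝ}

theorem DickmanRecurrence.abs_tail_le (hp : DickmanRecurrence m c p) (h : IsDickman ρ) (hm : 1 ≤ m)
    (hL : log (mesh m * k + 1) ≤ L) (hLm : 48 * L ≤ m)
    (hle : ∀ i < k, |p i| ≤ 2 * ρ (mesh m * i)) :
    |∑ i ∈ Finset.range (k - m), c (k - i) * p i| ≤ 28 * ρ (mesh m * k) := by
  have hm' : (0 : ℝ) < m := by exact_mod_cast hm
  have hmesh := mesh_pos hm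
  have hρ := h.pos (by positivity : 0 ≤ mesh m * k)
  have hL0 : 0 ≤ L := (log_nonneg (le_add_of_nonneg_left (by positivity))).trans hL
  have hterm : ∀ i ∈ Finset.range (k - m),
      |c (k - i) * p i| ≤ 4 * ρ (mesh m * k) * exp (-(k - i : ℕ) / 6) := by
    intro i hi
    rw [Finset.mem_range] at hi
    have hik : (i : ℝ) ≤ k := by exact_mod_cast (by lia : i ≤ k)
    have hrate : 8 * L * mesh m ≤ 1 / 6 := by
      calc 8 * L * mesh m ≤ 8 * L * (1 / m) := by gcongr; exact mesh_le m
        _ ≤ 1 / 6 := by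
          rw [mul_one_div, div_le_div_iff₀ hm' (by norm_num)]
          linarith
    have hgrowth : ρ (mesh m * i) ≤ ρ (mesh m * k) * exp ((k - i : ℕ) / 6) := by
      refine (h.le_mul_exp hL (by positivity)
        (mul_le_mul_of_nonneg_left hik hmesh.le)).trans ?_
      gcongr
      rw [Nat.cast_sub (by lia)]
      nlinarith
    rw [abs_mul, abs_of_nonneg (hp.coeff_nonneg _)]
    calc c (k - i) * |p i|
        ≤ 2 * exp (-(k - i : ℕ) / 3) * (2 * (ρ (mesh m * k) * exp ((k - i : ℕ) / 6))) :=
          mul_le_mul (hp.coeff_le _ (by lia)) ((hle i (by lia)).trans (by gcongr))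
            (abs_nonneg _) (by positivity)
      _ = 4 * ρ (mesh m * k) * (exp (-(k - i : ℕ) / 3) * exp ((k - i : ℕ) / 6)) := by ring
      _ = 4 * ρ (mesh m * k) * exp (-(k - i : ℕ) / 6) := by
          rw [← exp_add]
          ring_nf
  have hgeom : ∑ i ∈ Finset.range (k - m), exp (-(k - i : ℕ) / 6) ≤ 7 := by
    rw [Finset.range_eq_Ico, Finset.sum_Ico_reflect (fun j : ℕ ↦ exp (-j / 6)) 0 (by lia)]
    exact sum_exp_neg_div_six_le _
  refine (Finset.abs_sum_le_sum_abs _ _).trans ((Finset.sum_le_sum hterm).trans ?_)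
  rw [← Finset.mul_sum]
  nlinarith

theorem abs_sum_sub_mesh_le (h : IsDickman ρ) (hm : 1 ≤ m) (hmk : m ≤ k)
    (hle : ∀ i < k, |p i - ρ (mesh m * i)| ≤ relError m L i * ρ (mesh m * i)) :
    |∑ i ∈ Finset.Ico (k - m) k, (p i - ρ (mesh m * i))| ≤
      (relError m L k - relErrorStep m L k * m / 2) *
        ∑ i ∈ Finset.Ico (k - m) k, ρ (mesh m * i) := by
  have hpos : ∀ i : ℕ, 0 < ρ (mesh m * i) := fun i ↦
    h.pos (mul_nonneg (mesh_pos hm).le i.cast_nonneg)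
  have hcheb := sum_mul_div_two_le_sum_mul_sub (g := fun i ↦ ρ (mesh m * i)) hmk
    (fun i _ j _ hij ↦ h.antitoneOn_mesh hm
      (Set.mem_Ici.2 i.cast_nonneg) (Set.mem_Ici.2 j.cast_nonneg) (Nat.cast_le.2 hij))
    (hpos k).le
  calc |∑ i ∈ Finset.Ico (k - m) k, (p i - ρ (mesh m * i))|
      ≤ ∑ i ∈ Finset.Ico (k - m) k,
          (relError m L k - (k - i) * relErrorStep m L k) * ρ (mesh m * i) := by
        refine (Finset.abs_sum_le_sum_abs _ _).trans (Finset.sum_le_sum fun i hi ↦ ?_)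
        rw [Finset.mem_Ico] at hi
        exact (hle i hi.2).trans
          (mul_le_mul_of_nonneg_right (relError_le_sub hm i k) (hpos i).le)
    _ = relError m L k * ∑ i ∈ Finset.Ico (k - m) k, ρ (mesh m * i) -
          relErrorStep m L k * ∑ i ∈ Finset.Ico (k - m) k, ρ (mesh m * i) * (k - i) := by
        rw [Finset.mul_sum, Finset.mul_sum, ← Finset.sum_sub_distrib]
        exact Finset.sum_congr rfl fun i _ ↦ by ring
    _ ≤ _ := by linarith [mul_le_mul_of_nonneg_left hcheb (relErrorStep_nonneg m L k)]

theorem DickmanRecurrence.mul_sub_eq (hp : DickmanRecurrence m c p) (hmk : m ≤ k) (r : ℕ → ℝ) :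
    k * (p k - r k) =
      ∑ i ∈ Finset.range (k - m), c (k - i) * p i + ∑ i ∈ Finset.Ico (k - m) k, (p i - r i) +
        (∑ i ∈ Finset.Ico (k - m) k, r i - k * r k) := by
  have hcoeff : ∑ i ∈ Finset.Ico (k - m) k, c (k - i) * p i = ∑ i ∈ Finset.Ico (k - m) k, p i :=
    Finset.sum_congr rfl fun i hi ↦ by
      rw [Finset.mem_Ico] at hi
      rw [hp.coeff_eq_one _ (by lia) (by lia), one_mul]
  rw [mul_sub, hp.recurrence, ← Finset.sum_range_add_sum_Ico _ (k.sub_le m), hcoeff,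
    Finset.sum_sub_distrib]
  ring

theorem DickmanRecurrence.abs_sub_le_of_forall_lt (hp : DickmanRecurrence m c p) (h : IsDickman ρ)
    (hm : 1 ≤ m) (hk : m + 1 ≤ k) (hL : log (mesh m * k + 1) ≤ L) (hLm : 48 * L ≤ m)
    (hone : relError m L k ≤ 1)
    (hle : ∀ i < k, |p i - ρ (mesh m * i)| ≤ relError m L i * ρ (mesh m * i)) :
    |p k - ρ (mesh m * k)| ≤ relError m L k * ρ (mesh m * k) := by
  have hpos : ∀ i : ℕ, 0 < ρ (mesh m * i) := fun i ↦
    h.pos (mul_nonneg (mesh_pos hm).le i.cast_nonneg)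
  have hk' : (0 : ℝ) < k := by exact_mod_cast (by lia : 0 < k)
  have htail := hp.abs_tail_le h hm hL hLm fun i hi ↦ by
    have := abs_le.1 ((hle i hi).trans (mul_le_of_le_one_left (hpos i).le
      ((relError_mono hi.le).trans hone)))
    rw [abs_le]
    constructor <;> linarith [hpos i]
  have hmain := abs_sum_sub_mesh_le h hm (by lia) hle
  have hmesh := h.abs_sum_mesh_sub_le hm hk hL
  have htotal := (abs_add_three _ _ _).trans (add_le_add_three htail hmain hmesh)
  rw [← hp.mul_sub_eq (by lia) fun i ↦ ρ (mesh m * i), abs_mul, abs_of_pos hk'] at htotal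
  have hgain := le_mul_relErrorStep (L := L) hm (by lia : m ≤ k)
  have hstep := relErrorStep_mul_half_le (L := L) hm (by lia : m ≤ k)
  have hg : 0 ≤ relErrorStep m L k * m / 2 := by
    have := relErrorStep_nonneg m L k
    positivity
  generalize relErrorStep m L k * m / 2 = g at *
  set E := 40 * (1 + k * L ^ 2 / m ^ 2) * ρ (mesh m * k)
  have hmain' : (relError m L k - g) * ∑ i ∈ Finset.Ico (k - m) k, ρ (mesh m * i) ≤
      (relError m L k - g) * (k * ρ (mesh m * k)) + E := by
    have hsum : ∑ i ∈ Finset.Ico (k - m) k, ρ (mesh m * i) ≤ k * ρ (mesh m * k) + E := by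
      linarith [(abs_le.1 hmesh).2]
    have hle_one : relError m L k - g ≤ 1 := by linarith
    linarith [mul_le_mul_of_nonneg_left hsum (sub_nonneg.2 hstep),
      mul_le_of_le_one_left ((abs_nonneg _).trans hmesh) hle_one]
  have hE : 28 * ρ (mesh m * k) + 2 * E ≤ k * g * ρ (mesh m * k) := by
    have : 0 ≤ k * L ^ 2 / m ^ 2 * ρ (mesh m * k) := mul_nonneg (by positivity) (hpos k).le
    linarith [mul_le_mul_of_nonneg_right hgain (hpos k).le]
  refine le_of_mul_le_mul_left ?_ hk'
  linarith

theorem DickmanRecurrence.abs_sub_le (hp : DickmanRecurrence m c p) (h : IsDickman ρ) (hm : 1 ≤ m)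
    {n : ℕ} (hn : relError m (log (n / m + 1)) n ≤ 1) (hkn : k ≤ n) :
    |p k - ρ (mesh m * k)| ≤ relError m (log (n / m + 1)) k * ρ (mesh m * k) := by
  have hm' : (0 : ℝ) < m := by exact_mod_cast hm
  have hmesh := mesh_pos hm
  have hlog : 48 * log (n / m + 1 : ℝ) ≤ m := by
    have : 0 ≤ n * log (n / m + 1 : ℝ) ^ 2 / m ^ 3 := by positivity
    have hlog : 500 * (log (n / m + 1 : ℝ) / m) ≤ 1 := by rw [relError] at hn; linarith
    rw [← mul_div_assoc, div_le_one hm'] at hlog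
    linarith
  induction k using Nat.strong_induction_on with
  | _ k ih =>
    rcases le_or_gt k m with hkm | hkm
    · have hle : mesh m * k ≤ 1 := by
        refine (mesh_mul_le_div m k).trans ((div_le_one hm').2 ?_)
        exact_mod_cast hkm
      rw [hp.eq_one k hkm, h.eq_one (by positivity) hle, sub_self, abs_zero, mul_one]
      exact relError_nonneg _ _ _
    · have hkn' : (k : ℝ) ≤ n := by exact_mod_cast hkn
      refine hp.abs_sub_le_of_forall_lt h hm hkm (log_le_log (by positivity) ?_) hlog
        ((relError_mono hkn).trans hn) fun i hi ↦ ih i hi (by lia)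
      have : (k : ℝ) / m ≤ n / m := by gcongr
      linarith [mesh_mul_le_div m k]

end Recurrence

section FriablePolynomials

theorem sum_Icc_ite_mul_le_eq_sum_range {M : Type*} [AddCommMonoid M] {k d : ℕ} (hd : 0 < d)
    (g : ℕ → M) :
    (∑ a ∈ Finset.Icc 1 k, if a * d ≤ k then g (k - a * d) else 0) =
      ∑ i ∈ Finset.range k, if d ∣ k - i then g i else 0 := by
  rw [← Finset.sum_filter, ← Finset.sum_filter]
  refine Finset.sum_nbij' (fun a ↦ k - a * d) (fun i ↦ (k - i) / d) ?_ ?_ ?_ ?_ fun _ _ ↦ rfl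
  all_goals
    intro a ha
    simp only [Finset.mem_filter, Finset.mem_Icc, Finset.mem_range] at ha ⊢
  · have := Nat.mul_pos ha.1.1 hd
    exact ⟨by omega, a, by rw [Nat.sub_sub_self ha.2, mul_comm]⟩
  · have := Nat.div_mul_cancel ha.2
    have := Nat.div_pos (Nat.le_of_dvd (by omega) ha.2) hd
    have := Nat.div_le_self (k - a) d
    omega
  · rw [Nat.sub_sub_self ha.2, Nat.mul_div_cancel a hd]
  · rw [Nat.div_mul_cancel ha.2, Nat.sub_sub_self ha.1.le]

open Polynomial UniqueFactorizationMonoid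

section

variable {F : Type*} [Field F]

open scoped Classical in
theorem count_normalizedFactors_eq_card_pow_dvd {P f : F[X]} (hPm : P.Monic) (hP : Irreducible P)
    (hf : f ≠ 0) :
    (normalizedFactors f).count P = {a ∈ Finset.Icc 1 f.natDegree | P ^ a ∣ f}.card := by
  set c := (normalizedFactors f).count P
  have pow_dvd_iff (a : ℕ) : P ^ a ∣ f ↔ a ≤ c := by
    rw [pow_dvd_iff_le_emultiplicity, emultiplicity_eq_count_normalizedFactors hP hf,
      hPm.normalize_eq_self, Nat.cast_le]
  have hc : c ≤ f.natDegree := by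
    have := natDegree_le_of_dvd ((pow_dvd_iff c).2 le_rfl) hf
    rw [natDegree_pow] at this
    exact (Nat.le_mul_of_pos_right c hP.natDegree_pos).trans this
  have filter_eq : {a ∈ Finset.Icc 1 f.natDegree | P ^ a ∣ f} = Finset.Icc 1 c := by
    ext a
    simp only [Finset.mem_filter, Finset.mem_Icc, pow_dvd_iff]
    omega
  rw [filter_eq, Nat.card_Icc, Nat.add_sub_cancel]

open scoped Classical in
theorem natDegree_eq_sum_natDegree_normalizedFactors {f : F[X]} (hf : f ≠ 0) :
    f.natDegree = ((normalizedFactors f).map natDegree).sum := by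
  rw [← natDegree_multiset_prod _ (zero_notMem_normalizedFactors _),
    natDegree_eq_of_degree_eq (degree_eq_degree_of_associated (prod_normalizedFactors hf))]

open scoped Classical in
theorem monic_of_mem_normalizedFactors {P f : F[X]} (hP : P ∈ normalizedFactors f) : P.Monic := by
  rw [← normalize_normalized_factor P hP]
  exact monic_normalize (irreducible_of_normalized_factor P hP).ne_zero

variable (F) in
theorem natCard_monic_natDegree_eq (k : ℕ) :
    Nat.card {f : F[X] // f.Monic ∧ f.natDegree = k} = Nat.card F ^ k := by
  rw [Nat.card_congr ((monicEquivDegreeLT k).trans (degreeLTEquiv F k).toEquiv),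
    Nat.card_fun, Nat.card_fin]

end

section

variable (F : Type*) [Field F] [Finite F]

theorem finite_setOf_monic_natDegree_eq (k : ℕ) : {f : F[X] | f.Monic ∧ f.natDegree = k}.Finite :=
  Finite.of_equiv (Fin k → F) ((monicEquivDegreeLT k).trans (degreeLTEquiv F k).toEquiv).symm

theorem finite_setOf_monic_irreducible_natDegree_le (m : ℕ) :
    {P : F[X] | P.Monic ∧ Irreducible P ∧ P.natDegree ≤ m}.Finite :=
  ((Set.finite_Iic m).biUnion fun k _ ↦ finite_setOf_monic_natDegree_eq F k).subset
    fun _ hP ↦ Set.mem_biUnion (Set.mem_Iic.2 hP.2.2) ⟨hP.1, rfl⟩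

theorem finite_setOf_friable (m k : ℕ) :
    {f : F[X] | f.Monic ∧ f.natDegree = k ∧
      ∀ P : F[X], P.Monic → Irreducible P → P ∣ f → P.natDegree ≤ m}.Finite :=
  (finite_setOf_monic_natDegree_eq F k).subset fun _ hf ↦ ⟨hf.1, hf.2.1⟩

/-- The `m`-friable monic polynomials of degree `k` over a finite field, as a finite set; their
number is the numerator of `polyProb F k m`. -/
noncomputable def friableFinset (m k : ℕ) : Finset F[X] := (finite_setOf_friable F m k).toFinset

/-- The monic irreducible polynomials of degree at most `m` over a finite field, as a finite set;
these are the possible prime factors of an `m`-friable polynomial. -/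
noncomputable def irreducibleFinset (m : ℕ) : Finset F[X] :=
  (finite_setOf_monic_irreducible_natDegree_le F m).toFinset

/-- The sum `∑ deg P` over the monic irreducible polynomials `P` of degree at most `m` with
`deg P ∣ j`. Divided by `q ^ j`, it is the coefficient `c j` of the `DickmanRecurrence` satisfied by
the friable proportions. -/
noncomputable def primeWeight (m j : ℕ) : ℕ :=
  ∑ P ∈ irreducibleFinset F m with P.natDegree ∣ j, P.natDegree

variable {F} {m k j : ℕ} {P f : F[X]}

theorem mem_friableFinset :
    f ∈ friableFinset F m k ↔ f.Monic ∧ f.natDegree = k ∧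
      ∀ P : F[X], P.Monic → Irreducible P → P ∣ f → P.natDegree ≤ m :=
  Set.Finite.mem_toFinset _

theorem mem_irreducibleFinset :
    P ∈ irreducibleFinset F m ↔ P.Monic ∧ Irreducible P ∧ P.natDegree ≤ m :=
  Set.Finite.mem_toFinset _

theorem card_friableFinset_le : (friableFinset F m k).card ≤ Nat.card F ^ k := by
  have hfin := finite_setOf_monic_natDegree_eq F k
  rw [← natCard_monic_natDegree_eq, ← Set.coe_ofPred, Nat.card_eq_card_finite_toFinset hfin]
  exact Finset.card_le_card (Set.Finite.toFinset_subset_toFinset.2 fun _ hf ↦ ⟨hf.1, hf.2.1⟩)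

theorem card_friableFinset_of_le (hk : k ≤ m) :
    (friableFinset F m k).card = Nat.card F ^ k := by
  rw [← natCard_monic_natDegree_eq, friableFinset,
    ← Nat.card_eq_card_finite_toFinset (finite_setOf_friable F m k)]
  refine Nat.card_congr (Equiv.subtypeEquivRight fun f ↦ ⟨fun h ↦ ⟨h.1, h.2.1⟩, fun h ↦ ?_⟩)
  exact ⟨h.1, h.2, fun P _ _ hPf ↦
    (natDegree_le_of_dvd hPf h.1.ne_zero).trans (h.2.le.trans hk)⟩

open scoped Classical in
theorem eq_sum_card_pow_dvd_mul_natDegree (hf : f ∈ friableFinset F m k) :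
    k = ∑ P ∈ irreducibleFinset F m,
      {a ∈ Finset.Icc 1 k | P ^ a ∣ f}.card * P.natDegree := by
  obtain ⟨hfm, rfl, hfri⟩ := mem_friableFinset.1 hf
  have normalizedFactors_subset : (normalizedFactors f).toFinset ⊆ irreducibleFinset F m := by
    intro P hP
    rw [Multiset.mem_toFinset] at hP
    have hPm := monic_of_mem_normalizedFactors hP
    have hPi := irreducible_of_normalized_factor P hP
    exact mem_irreducibleFinset.2 ⟨hPm, hPi, hfri P hPm hPi (dvd_of_mem_normalizedFactors hP)⟩
  calc f.natDegree = ((normalizedFactors f).map natDegree).sum :=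
        natDegree_eq_sum_natDegree_normalizedFactors hfm.ne_zero
    _ = ∑ P ∈ irreducibleFinset F m, (normalizedFactors f).count P * P.natDegree := by
        rw [Finset.sum_multiset_map_count]
        refine Finset.sum_subset normalizedFactors_subset fun P _ hP ↦ ?_
        rw [Multiset.mem_toFinset] at hP
        rw [Multiset.count_eq_zero_of_notMem hP, zero_smul]
    _ = _ := Finset.sum_congr rfl fun P hP ↦ by
        obtain ⟨hPm, hPi, -⟩ := mem_irreducibleFinset.1 hP
        rw [count_normalizedFactors_eq_card_pow_dvd hPm hPi hfm.ne_zero]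

theorem mul_mem_friableFinset_iff {Q : F[X]} {d : ℕ} (hQ : Q ∈ friableFinset F m d) {g : F[X]} :
    Q * g ∈ friableFinset F m (d + k) ↔ g ∈ friableFinset F m k := by
  obtain ⟨hQm, rfl, hQfri⟩ := mem_friableFinset.1 hQ
  rw [mem_friableFinset, mem_friableFinset]
  constructor
  · rintro ⟨hm, hdeg, hfri⟩
    have hg := hQm.of_mul_monic_left hm
    rw [hQm.natDegree_mul hg, Nat.add_left_cancel_iff] at hdeg
    exact ⟨hg, hdeg, fun P hPm hPi hPg ↦ hfri P hPm hPi (hPg.mul_left Q)⟩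
  · rintro ⟨hg, rfl, hfri⟩
    refine ⟨hQm.mul hg, hQm.natDegree_mul hg, fun P hPm hPi hPQg ↦ ?_⟩
    exact (hPi.prime.dvd_or_dvd hPQg).elim (hQfri P hPm hPi) (hfri P hPm hPi)

theorem pow_mem_friableFinset (hP : P ∈ irreducibleFinset F m) (a : ℕ) :
    P ^ a ∈ friableFinset F m (a * P.natDegree) := by
  obtain ⟨hPm, -, hPdeg⟩ := mem_irreducibleFinset.1 hP
  refine mem_friableFinset.2 ⟨hPm.pow a, natDegree_pow P a, fun R _ hRi hR ↦ ?_⟩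
  exact (natDegree_le_of_dvd (hRi.prime.dvd_of_dvd_pow hR) hPm.ne_zero).trans hPdeg

open scoped Classical in
theorem card_filter_pow_dvd_friableFinset (hP : P ∈ irreducibleFinset F m) (a : ℕ) :
    {f ∈ friableFinset F m k | P ^ a ∣ f}.card =
      if a * P.natDegree ≤ k then (friableFinset F m (k - a * P.natDegree)).card else 0 := by
  have hPa := pow_mem_friableFinset hP a
  split_ifs with hle
  · rw [← Finset.card_image_of_injective (friableFinset F m (k - a * P.natDegree))
      (mul_right_injective₀ (mem_friableFinset.1 hPa).1.ne_zero)]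
    obtain ⟨l, rfl⟩ := Nat.exists_eq_add_of_le hle
    congr 1
    ext f
    rw [Finset.mem_filter, Finset.mem_image, Nat.add_sub_cancel_left]
    constructor
    · rintro ⟨hf, g, rfl⟩
      exact ⟨g, (mul_mem_friableFinset_iff hPa).1 hf, rfl⟩
    · rintro ⟨g, hg, rfl⟩
      exact ⟨(mul_mem_friableFinset_iff hPa).2 hg, dvd_mul_right _ g⟩
  · rw [Finset.card_eq_zero, Finset.filter_eq_empty_iff]
    intro f hf hdvd
    obtain ⟨hfm, rfl, -⟩ := mem_friableFinset.1 hf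
    exact hle ((natDegree_pow P a).symm.trans_le (natDegree_le_of_dvd hdvd hfm.ne_zero))

/- Logarithmic differentiation of the Euler product, done combinatorially: sum the degrees of the
friable polynomials of degree `k`, each degree being expanded over the prime powers dividing it. -/
theorem mul_card_friableFinset (m k : ℕ) :
    k * (friableFinset F m k).card =
      ∑ i ∈ Finset.range k, primeWeight F m (k - i) * (friableFinset F m i).card := by
  classical
  calc k * (friableFinset F m k).card = ∑ _f ∈ friableFinset F m k, k := by
        rw [Finset.sum_const, smul_eq_mul, mul_comm]
    _ = ∑ P ∈ irreducibleFinset F m, ∑ f ∈ friableFinset F m k,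
          {a ∈ Finset.Icc 1 k | P ^ a ∣ f}.card * P.natDegree := by
        rw [Finset.sum_comm]
        exact Finset.sum_congr rfl fun _ hf ↦ eq_sum_card_pow_dvd_mul_natDegree hf
    _ = ∑ P ∈ irreducibleFinset F m, ∑ i ∈ Finset.range k,
          if P.natDegree ∣ k - i then P.natDegree * (friableFinset F m i).card else 0 := by
        refine Finset.sum_congr rfl fun P hP ↦ ?_
        have double_count := Finset.sum_card_bipartiteAbove_eq_sum_card_bipartiteBelow
          (s := friableFinset F m k) (t := Finset.Icc 1 k) (fun f a ↦ P ^ a ∣ f)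
        simp only [Finset.bipartiteAbove, Finset.bipartiteBelow] at double_count
        simp only [card_filter_pow_dvd_friableFinset hP] at double_count
        rw [← Finset.sum_mul, double_count, sum_Icc_ite_mul_le_eq_sum_range
          (mem_irreducibleFinset.1 hP).2.1.natDegree_pos fun i ↦ (friableFinset F m i).card,
          mul_comm, Finset.mul_sum]
        simp only [mul_ite, mul_zero]
    _ = ∑ i ∈ Finset.range k, primeWeight F m (k - i) * (friableFinset F m i).card := by
        rw [Finset.sum_comm]
        refine Finset.sum_congr rfl fun i _ ↦ ?_
        rw [primeWeight, Finset.sum_mul, Finset.sum_filter]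

theorem primeWeight_eq_self (hj : 1 ≤ j) (hjm : j ≤ m) : primeWeight F m j = primeWeight F j j := by
  refine Finset.sum_congr ?_ fun _ _ ↦ rfl
  ext P
  simp only [Finset.mem_filter, mem_irreducibleFinset]
  refine and_congr_left fun hdvd ↦ and_congr_right fun _ ↦ and_congr_right fun _ ↦ ?_
  have := Nat.le_of_dvd hj hdvd
  omega

variable (F) in
/- Polynomials of degree `≤ j` are `j`-friable, so the recurrence determines the weights. -/
theorem primeWeight_self (hj : 1 ≤ j) : primeWeight F j j = Nat.card F ^ j := by
  induction j using Nat.strong_induction_on with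
  | _ j ih =>
    obtain ⟨l, rfl⟩ := Nat.exists_eq_add_of_le' hj
    have recurrence := mul_card_friableFinset (F := F) (l + 1) (l + 1)
    have term_eq (i : ℕ) (hi : i ∈ Finset.range l) :
        primeWeight F (l + 1) (l + 1 - (i + 1)) * (friableFinset F (l + 1) (i + 1)).card =
          Nat.card F ^ (l + 1) := by
      have := Finset.mem_range.1 hi
      rw [primeWeight_eq_self (by omega) (by omega), ih _ (by omega) (by omega),
        card_friableFinset_of_le (by omega), ← pow_add, Nat.sub_add_cancel (by omega)]
    rw [Finset.sum_range_succ', Finset.sum_congr rfl term_eq, Finset.sum_const, Finset.card_range,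
      smul_eq_mul, card_friableFinset_of_le le_rfl, card_friableFinset_of_le (Nat.zero_le _),
      Nat.sub_zero, pow_zero, mul_one, add_mul, one_mul] at recurrence
    exact (Nat.add_left_cancel recurrence).symm

theorem primeWeight_of_le (hj : 1 ≤ j) (hjm : j ≤ m) : primeWeight F m j = Nat.card F ^ j := by
  rw [primeWeight_eq_self hj hjm, primeWeight_self F hj]

theorem primeWeight_le_of_lt (hmj : m < j) : primeWeight F m j ≤ 2 * Nat.card F ^ (j / 2) := by
  have natDegree_mem : ∀ P ∈ {P ∈ irreducibleFinset F m | P.natDegree ∣ j},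
      P.natDegree ∈ Finset.range (j / 2 + 1) := by
    intro P hP
    obtain ⟨hP, hdvd⟩ := Finset.mem_filter.1 hP
    have hdeg := (mem_irreducibleFinset.1 hP).2.2
    have := Nat.eq_of_dvd_of_lt_two_mul (by omega) hdvd
    rw [Finset.mem_range]
    omega
  have fiber_le (d : ℕ) :
      ∑ P ∈ irreducibleFinset F m with P.natDegree ∣ j ∧ P.natDegree = d, P.natDegree ≤
        Nat.card F ^ d := by
    rcases Nat.eq_zero_or_pos d with rfl | hd
    · exact (Finset.sum_eq_zero fun P hP ↦ (Finset.mem_filter.1 hP).2.2).trans_le (Nat.zero_le _)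
    · rw [← primeWeight_self F hd]
      refine Finset.sum_le_sum_of_subset fun P hP ↦ ?_
      obtain ⟨hPmem, -, rfl⟩ := Finset.mem_filter.1 hP
      obtain ⟨hPm, hPi, -⟩ := mem_irreducibleFinset.1 hPmem
      exact Finset.mem_filter.2 ⟨mem_irreducibleFinset.2 ⟨hPm, hPi, le_rfl⟩, dvd_rfl⟩
  calc primeWeight F m j ≤ ∑ d ∈ Finset.range (j / 2 + 1), Nat.card F ^ d := by
        rw [primeWeight, ← Finset.sum_fiberwise_of_maps_to natDegree_mem]
        refine Finset.sum_le_sum fun d _ ↦ ?_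
        rw [Finset.filter_filter]
        exact fiber_le d
    _ ≤ 2 * Nat.card F ^ (j / 2) := by
        have geomSum_lt := Nat.geomSum_lt (s := Finset.range (j / 2)) (Finite.one_lt_card (α := F))
          fun _ ↦ Finset.mem_range.1
        rw [Finset.sum_range_succ]
        omega

end

theorem pow_half_div_pow_le_exp {q : ℝ} (hq : 2 ≤ q) (j : ℕ) :
    q ^ (j / 2) / q ^ j ≤ exp (-j / 3) := by
  have exp_le : exp (j / 3) ≤ q ^ (j - j / 2) := by
    have hj : (j : ℝ) ≤ 2 * (j - j / 2 : ℕ) := by exact_mod_cast (by omega : j ≤ 2 * (j - j / 2))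
    calc exp (j / 3) ≤ exp (log 2 * (j - j / 2 : ℕ)) := by
          have := log_two_gt_d9
          gcongr
          nlinarith
      _ = 2 ^ (j - j / 2) := by rw [← rpow_natCast, rpow_def_of_pos two_pos]
      _ ≤ q ^ (j - j / 2) := by gcongr
  rw [neg_div, exp_neg, ← Nat.add_sub_of_le (Nat.div_le_self j 2), pow_add,
    Nat.add_sub_of_le (Nat.div_le_self j 2), div_mul_cancel_left₀ (by positivity)]
  gcongr

section

variable {F : Type} [Field F] [Fintype F] {m k : ℕ}

theorem polyProb_eq_card_friableFinset_div :
    polyProb F k m = (friableFinset F m k).card / (Nat.card F : ℝ) ^ k := by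
  rw [polyProb, friableFinset, ← Nat.card_eq_card_finite_toFinset,
    Nat.card_eq_fintype_card (α := F), Set.coe_ofPred]

theorem polyProb_nonneg : 0 ≤ polyProb F k m := by
  rw [polyProb]
  positivity

theorem polyProb_le_one : polyProb F k m ≤ 1 := by
  rw [polyProb_eq_card_friableFinset_div]
  exact div_le_one_of_le₀ (mod_cast card_friableFinset_le) (by positivity)

variable (F m) in
theorem dickmanRecurrence_polyProb :
    DickmanRecurrence m (fun j ↦ primeWeight F m j / (Nat.card F : ℝ) ^ j)
      (fun k ↦ polyProb F k m) := by
  have hq : (2 : ℝ) ≤ Nat.card F := mod_cast Finite.one_lt_card (α := F)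
  refine ⟨fun j ↦ by positivity, fun j hj hjm ↦ ?_, fun j hmj ↦ ?_, fun k hk ↦ ?_, fun k ↦ ?_⟩
  · rw [primeWeight_of_le hj hjm, Nat.cast_pow, div_self (by positivity)]
  · calc (primeWeight F m j : ℝ) / (Nat.card F : ℝ) ^ j
        ≤ 2 * (Nat.card F : ℝ) ^ (j / 2) / (Nat.card F : ℝ) ^ j := by
          gcongr
          exact_mod_cast primeWeight_le_of_lt hmj
      _ ≤ 2 * exp (-j / 3) := by
          rw [mul_div_assoc]
          gcongr
          exact pow_half_div_pow_le_exp hq j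
  · rw [polyProb_eq_card_friableFinset_div, card_friableFinset_of_le hk, Nat.cast_pow,
      div_self (by positivity)]
  · have recurrence : (k : ℝ) * (friableFinset F m k).card =
        ∑ i ∈ Finset.range k, (primeWeight F m (k - i) : ℝ) * (friableFinset F m i).card :=
      mod_cast mul_card_friableFinset m k
    simp only [polyProb_eq_card_friableFinset_div]
    rw [← mul_div_assoc, recurrence, Finset.sum_div]
    refine Finset.sum_congr rfl fun i hi ↦ ?_
    rw [div_mul_div_comm, ← pow_add, Nat.sub_add_cancel (Finset.mem_range.1 hi).le]

end

end FriablePolynomials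

theorem mul_log_div_add_one_le {A : ℝ} {n m : ℕ} (hm : 1 ≤ m) (h : √(n * log n) ≤ A * m) :
    n * log (n / m + 1) ≤ (A ^ 2 + 1) * m ^ 2 := by
  have hm' : (1 : ℝ) ≤ m := mod_cast hm
  rcases Nat.eq_zero_or_pos n with rfl | hn
  · rw [Nat.cast_zero, zero_mul]
    positivity
  have log_le : log (n / m + 1) ≤ log n + 1 / n := by
    calc log (n / m + 1) ≤ log (n * (1 / n + 1)) := by
          gcongr
          rw [mul_add, mul_one_div_cancel (by positivity), mul_one, add_comm 1]
          gcongr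
          exact div_le_self (by positivity) hm'
      _ = log n + log (1 / n + 1) := log_mul (by positivity) (by positivity)
      _ ≤ log n + 1 / n := by
          gcongr
          linarith [log_le_sub_one_of_pos (show (0 : ℝ) < 1 / n + 1 by positivity)]
  calc n * log (n / m + 1) ≤ n * (log n + 1 / n) := by gcongr
    _ = n * log n + 1 := by rw [mul_add, mul_one_div_cancel (by positivity)]
    _ ≤ (A * m) ^ 2 + 1 := by
        gcongr
        exact (sqrt_le_iff.1 h).2
    _ ≤ (A ^ 2 + 1) * m ^ 2 := by nlinarith

theorem relError_le {A : ℝ} {n m : ℕ} (hm : 1 ≤ m) (h : n * log (n / m + 1) ≤ A * m ^ 2) :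
    relError m (log (n / m + 1)) n ≤ 500 * (1 + A) * log (n / m + 1) / m := by
  have hL : 0 ≤ log ((n : ℝ) / m + 1) := log_nonneg (le_add_of_nonneg_left (by positivity))
  set L := log ((n : ℝ) / m + 1)
  have second_le : n * L ^ 2 / m ^ 3 ≤ A * L / m := by
    calc n * L ^ 2 / m ^ 3 = n * L * L / m ^ 3 := by ring
      _ ≤ A * m ^ 2 * L / m ^ 3 := by gcongr
      _ = A * L / m := by field_simp
  calc relError m L n = 500 * (L / m + n * L ^ 2 / m ^ 3) := rfl
    _ ≤ 500 * (L / m + A * L / m) := by gcongr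
    _ = 500 * (1 + A) * L / m := by ring

theorem DickmanRecurrence.abs_div_sub_one_le {ρ : ℝ → ℝ} {m n : ℕ} {c p : ℕ → ℝ}
    (hp : DickmanRecurrence m c p) (h : IsDickman ρ) (hm : 1 ≤ m)
    (hn : relError m (log (n / m + 1)) n ≤ 1) :
    |p n / ρ (mesh m * n) - 1| ≤ relError m (log (n / m + 1)) n := by
  have hρ : 0 < ρ (mesh m * n) := h.pos (by have := mesh_pos hm; positivity)
  rw [div_sub_one hρ.ne', abs_div, abs_of_pos hρ, div_le_iff₀ hρ]
  exact hp.abs_sub_le h hm hn le_rfl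

theorem IsDickman.abs_div_sub_one_le {ρ : ℝ → ℝ} (h : IsDickman ρ) {p t U : ℝ} (hp0 : 0 ≤ p)
    (hp1 : p ≤ 1) (ht : 0 ≤ t) (htU : t ≤ U) :
    |p / ρ t - 1| ≤ exp (8 * log (U + 1) * U) := by
  have hρ := h.pos ht
  have inv_le : 1 / ρ t ≤ exp (8 * log (U + 1) * U) := by
    have hlog : 0 ≤ log (U + 1) := log_nonneg (le_add_of_nonneg_left (ht.trans htU))
    rw [div_le_iff₀' hρ]
    calc 1 = ρ 0 := (h.eq_one le_rfl zero_le_one).symm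
      _ ≤ ρ t * exp (8 * log (U + 1) * (t - 0)) := h.le_mul_exp (by gcongr) le_rfl ht
      _ ≤ ρ t * exp (8 * log (U + 1) * U) := by
          rw [sub_zero]
          gcongr
  have one_le_inv : 1 ≤ 1 / ρ t := (one_le_div hρ).2 (h.le_one ht)
  have div_nonneg : 0 ≤ p / ρ t := by positivity
  have div_le : p / ρ t ≤ 1 / ρ t := by gcongr
  rw [abs_le]
  constructor <;> linarith

theorem stmt9_general {A : ℝ} (hA : 0 ≤ A) :
    ∃ C > 0, ∀ (F : Type) [Field F] [Fintype F] (n m : ℕ), 1 ≤ m →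
      n * log (n / m + 1) ≤ A * m ^ 2 → ∀ ρ : ℝ → ℝ, IsDickman ρ →
      |polyProb F n m / ρ (n / m - n / (2 * m ^ 2)) - 1| ≤ C * log (n / m + 1) / m := by
  set B := 500 * (1 + A)
  set K := exp (8 * log (A * B + 1) * (A * B))
  have hB0 : 0 < B := by positivity
  have hK : 1 ≤ K := by
    have := log_nonneg (show (1 : ℝ) ≤ A * B + 1 by linarith [mul_nonneg hA hB0.le])
    exact one_le_exp (by positivity)
  refine ⟨K * B, by positivity, fun F _ _ n m hm h ρ hρ ↦ ?_⟩
  have hm0 : (0 : ℝ) < m := mod_cast hm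
  have mesh_mul : (n : ℝ) / m - n / (2 * m ^ 2) = mesh m * n := by rw [mesh]; ring
  rw [mesh_mul]
  set L := log ((n : ℝ) / m + 1)
  have relError_le : relError m L n ≤ B * L / m := relError_le hm h
  have hL : 0 ≤ L := log_nonneg (le_add_of_nonneg_left (by positivity))
  rw [mul_assoc, mul_div_assoc]
  rcases le_or_gt (B * L / m) 1 with hsmall | hlarge
  · calc |polyProb F n m / ρ (mesh m * n) - 1| ≤ relError m L n :=
          (dickmanRecurrence_polyProb F m).abs_div_sub_one_le hρ hm (relError_le.trans hsmall)
      _ ≤ B * L / m := relError_le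
      _ ≤ K * (B * L / m) := le_mul_of_one_le_left (by positivity) hK
  · have div_le : (n : ℝ) / m ≤ A * B := by
      have hmL : m ≤ B * L := by
        rw [lt_div_iff₀ hm0, one_mul] at hlarge
        exact hlarge.le
      rw [div_le_iff₀ hm0]
      refine le_of_mul_le_mul_right ?_ hm0
      calc (n : ℝ) * m ≤ n * (B * L) := by gcongr
        _ = n * L * B := by ring
        _ ≤ A * m ^ 2 * B := by gcongr
        _ = A * B * m * m := by ring
    calc |polyProb F n m / ρ (mesh m * n) - 1| ≤ K :=
          hρ.abs_div_sub_one_le polyProb_nonneg polyProb_le_one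
            (by have := mesh_pos hm; positivity) ((mesh_mul_le_div m n).trans div_le)
      _ ≤ K * (B * L / m) := le_mul_of_one_le_right (by positivity) hlarge.le

/-- For every `ε > 0` and `A > 0` there exists `C > 0` such that for every
prime power `q` (the cardinality of a finite field `F`) and all `n ≥ m ≥ 1` with
`m ≥ (2+ε)·log_q n` and `√(n·log n) ≤ A·m`, writing `u = n/m`, one has
`|p_{n,m,q}/ρ(n/m − n/(2m²)) − 1| ≤ C·log(u+1)/m`. -/
theorem stmt9 :
    ∀ ε : ℝ, 0 < ε → ∀ A : ℝ, 0 < A → ∃ C : ℝ, 0 < C ∧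
      ∀ (F : Type) [Field F] [Fintype F], ∀ n m : ℕ, 1 ≤ m → m ≤ n →
      (2 + ε) * Real.log n / Real.log (Fintype.card F) ≤ (m : ℝ) →
      Real.sqrt ((n : ℝ) * Real.log n) ≤ A * (m : ℝ) →
      ∀ ρ : ℝ → ℝ, IsDickman ρ → ∀ u : ℝ, u = (n : ℝ) / (m : ℝ) →
      |polyProb F n m / ρ ((n : ℝ) / (m : ℝ) - (n : ℝ) / (2 * (m : ℝ) ^ 2)) - 1| ≤
        C * Real.log (u + 1) / (m : ℝ) := by
  intro ε _ A _
  obtain ⟨C, hC, h⟩ := stmt9_general (add_nonneg (sq_nonneg A) zero_le_one)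
  exact ⟨C, hC, fun F _ _ n m hm _ _ hn ρ hρ u hu ↦
    hu ▸ h F n m hm (mul_log_div_add_one_le hm hn) ρ hρ⟩
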